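/- (Sketch monotonicity for k-means.) Let A ∈ ℝ^{n×d} with rows A_1,…,A_n, let η ∈ (0,1/3], and let S ∈ ℝ^{m×n} be a matrix such that, writing the SVD SA = UΣVᵀ (V having orthonormal columns spanning row(SA)), one has ‖A − AVVᵀ‖₂² ≤ (η/k)·‖A − A_k‖_F². Let S̄ be an extension of S, let π denote orthogonal projection of ℝ^d onto row(S̄A), and let α ≥ 1. Suppose C̄ = {C̄_1,…,C̄_k} is a partition of [n] whose k-means cost on the projected points π(A_1),…,π(A_n) (with optimal centers per cluster) is at most α times the optimal k-means cost of the projected points. Then the k-means cost of A under the partition C̄ with optimal centers, namely ∑_{i=1}^k min_{μ_i∈ℝ^d} ∑_{j∈C̄_i} ‖A_j − μ_i‖², is at most α(1+η)² times the optimal k-means cost of A. -/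

import Mathlib

/-!
Write each row as `A_j = B_j + E_j` with `B_j = π(A_j)` in `row(S̄A)` and `E_j` orthogonal to it.
The cost of a partition `c` with optimal centers is `∑ ‖P_j‖²` minus the energy of the centroids
(`kmeansCost_eq`), so Pythagoras gives `cost(A, c) = cost(B, c) + cost(E, c)` (`kmeansCost_add`), and
`cost(E, c) = ‖E‖_F² - g(c)`, where `g(c) ≥ 0` is the centroid energy of `E`.

The residual `E` has squared spectral norm at most `(η/k) ‖A - A_k‖_F²`, since it is orthogonal to
`row(SA)`. Hence each of the `k` clusters contributes at most that amount to `g(c)`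
(`sqNorm_sum_le`, `centroidEnergy_le`), and as the centroid matrix has rank at most `k`
(`frobSq_le_kmeansCost`), `g(c) ≤ η ‖A - A_k‖_F² ≤ η cost(A, c)`. With `c` an optimal partition for
`A` and `α ≥ 1`,
`cost(A, c̄) ≤ α cost(B, c) + ‖E‖_F² ≤ α (cost(A, c) + g(c)) ≤ α (1 + η) cost(A, c)`.
-/

open Matrix

/-- Squared Frobenius norm of a real matrix. -/
noncomputable def frobSq {m n : Type*} [Fintype m] [Fintype n] (M : Matrix m n ℝ) : ℝ :=
  ∑ i, ∑ j, (M i j) ^ 2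

/-- Row space of a real matrix: the span of its rows. -/
def rowSpace {m n : Type*} (M : Matrix m n ℝ) : Submodule ℝ (n → ℝ) :=
  Submodule.span ℝ (Set.range fun i => M i)

/-- Column space of a real matrix: the span of its columns. -/
def colSpace {m n : Type*} (M : Matrix m n ℝ) : Submodule ℝ (m → ℝ) :=
  Submodule.span ℝ (Set.range fun j => Mᵀ j)

/-- Squared Euclidean norm of a vector in `ℝ^d`. -/
noncomputable def sqNorm {d : ℕ} (x : Fin d → ℝ) : ℝ := ∑ l, (x l) ^ 2

/-- Euclidean dot product on `ℝ^d`. -/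
noncomputable def dotp {d : ℕ} (x y : Fin d → ℝ) : ℝ := ∑ l, x l * y l

/-- The `k`-means cost of the points `P 0, …, P (n-1)` under the partition (cluster
assignment) `c`, where each cluster uses its optimal center. -/
noncomputable def kmeansCost {n d k : ℕ} (P : Fin n → Fin d → ℝ) (c : Fin n → Fin k) : ℝ :=
  ∑ i : Fin k, ⨅ μ : Fin d → ℝ,
    ∑ j ∈ Finset.univ.filter (fun j => c j = i), sqNorm (P j - μ)

/-! ### Dot product and squared norm -/

lemma sqNorm_eq {d : ℕ} (x : Fin d → ℝ) : sqNorm x = dotp x x := by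
  simp [sqNorm, dotp, sq]

lemma sqNorm_nonneg {d : ℕ} (x : Fin d → ℝ) : 0 ≤ sqNorm x :=
  Finset.sum_nonneg fun _ _ => sq_nonneg _

lemma dotp_comm {d : ℕ} (x y : Fin d → ℝ) : dotp x y = dotp y x := by
  simp [dotp, mul_comm]

lemma dotp_add_left {d : ℕ} (x y z : Fin d → ℝ) : dotp (x + y) z = dotp x z + dotp y z := by
  simp [dotp, add_mul, Finset.sum_add_distrib]

lemma dotp_sum_left {d : ℕ} {ι : Type*} (s : Finset ι) (f : ι → Fin d → ℝ) (y : Fin d → ℝ) :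
    dotp (∑ j ∈ s, f j) y = ∑ j ∈ s, dotp (f j) y := by
  simp only [dotp, Finset.sum_apply, Finset.sum_mul]
  exact Finset.sum_comm

lemma sqNorm_add_of_orth {d : ℕ} {x y : Fin d → ℝ} (h : dotp x y = 0) :
    sqNorm (x + y) = sqNorm x + sqNorm y := by
  have : sqNorm (x + y) = sqNorm x + sqNorm y + 2 * dotp x y := by
    simp only [sqNorm, dotp, Finset.mul_sum, ← Finset.sum_add_distrib, Pi.add_apply]
    exact Finset.sum_congr rfl fun _ _ => by ring
  rw [this, h]; ring

/-! ### Cost of a single cluster -/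

/-- Centroid of a cluster; the junk value `0⁻¹ = 0` makes it `0` for an empty cluster. -/
noncomputable def centroid {n d : ℕ} (P : Fin n → Fin d → ℝ) (C : Finset (Fin n)) : Fin d → ℝ :=
  (C.card : ℝ)⁻¹ • ∑ j ∈ C, P j

/-- Parallel-axis identity; completing the square in the center `μ`. -/
lemma sum_sqNorm_sub {n d : ℕ} (P : Fin n → Fin d → ℝ) (C : Finset (Fin n)) (μ : Fin d → ℝ) :
    ∑ j ∈ C, sqNorm (P j - μ)
      = ∑ j ∈ C, sqNorm (P j) - sqNorm (∑ j ∈ C, P j) / C.card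
        + C.card * sqNorm (μ - centroid P C) := by
  simp only [sqNorm, centroid, Pi.sub_apply, Pi.smul_apply, Finset.sum_apply, smul_eq_mul]
  rw [Finset.sum_comm, Finset.sum_comm (s := C), Finset.sum_div, Finset.mul_sum,
    ← Finset.sum_sub_distrib, ← Finset.sum_add_distrib]
  refine Finset.sum_congr rfl fun l _ => ?_
  have h : ∑ j ∈ C, (P j l - μ l) ^ 2
      = ∑ j ∈ C, P j l ^ 2 - 2 * μ l * ∑ j ∈ C, P j l + C.card * μ l ^ 2 := by
    rw [Finset.mul_sum, ← Finset.sum_sub_distrib, ← nsmul_eq_mul, ← Finset.sum_const,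
      ← Finset.sum_add_distrib]
    exact Finset.sum_congr rfl fun _ _ => by ring
  rw [h]
  rcases C.eq_empty_or_nonempty with rfl | hC
  · simp
  · have : (C.card : ℝ) ≠ 0 := by exact_mod_cast hC.card_pos.ne'
    field_simp
    ring

lemma sum_sqNorm_sub_centroid {n d : ℕ} (P : Fin n → Fin d → ℝ) (C : Finset (Fin n)) :
    ∑ j ∈ C, sqNorm (P j - centroid P C)
      = ∑ j ∈ C, sqNorm (P j) - sqNorm (∑ j ∈ C, P j) / C.card := by
  rw [sum_sqNorm_sub, sub_self]
  simp [sqNorm]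

lemma iInf_center {n d : ℕ} (P : Fin n → Fin d → ℝ) (C : Finset (Fin n)) :
    ⨅ μ : Fin d → ℝ, ∑ j ∈ C, sqNorm (P j - μ) = ∑ j ∈ C, sqNorm (P j - centroid P C) := by
  refine le_antisymm (ciInf_le ⟨0, ?_⟩ _) (le_ciInf fun μ => ?_)
  · rintro _ ⟨μ, rfl⟩
    exact Finset.sum_nonneg fun _ _ => sqNorm_nonneg _
  · rw [sum_sqNorm_sub_centroid, sum_sqNorm_sub]
    have := mul_nonneg (Nat.cast_nonneg (α := ℝ) C.card) (sqNorm_nonneg (μ - centroid P C))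
    linarith

/-! ### Cost of a partition -/

/-- The `i`-th cluster of the assignment `c`. -/
def cluster {n k : ℕ} (c : Fin n → Fin k) (i : Fin k) : Finset (Fin n) :=
  Finset.univ.filter (fun j => c j = i)

/-- Squared Frobenius norm of the points replaced by their cluster centroids. -/
noncomputable def centroidEnergy {n d k : ℕ} (P : Fin n → Fin d → ℝ) (c : Fin n → Fin k) : ℝ :=
  ∑ i : Fin k, sqNorm (∑ j ∈ cluster c i, P j) / (cluster c i).card

lemma kmeansCost_eq {n d k : ℕ} (P : Fin n → Fin d → ℝ) (c : Fin n → Fin k) :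
    kmeansCost P c = ∑ j, sqNorm (P j) - centroidEnergy P c := by
  rw [← Finset.sum_fiberwise (s := Finset.univ) (g := c), centroidEnergy, ← Finset.sum_sub_distrib]
  refine Finset.sum_congr rfl fun i _ => ?_
  rw [iInf_center, sum_sqNorm_sub_centroid]
  rfl

lemma kmeansCost_eq_centroid {n d k : ℕ} (P : Fin n → Fin d → ℝ) (c : Fin n → Fin k) :
    kmeansCost P c = ∑ j, sqNorm (P j - centroid P (cluster c (c j))) := by
  rw [← Finset.sum_fiberwise (s := Finset.univ) (g := c)]
  refine Finset.sum_congr rfl fun i _ => ?_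
  rw [iInf_center]
  refine Finset.sum_congr rfl fun j hj => ?_
  rw [(Finset.mem_filter.1 hj).2]
  rfl

lemma centroidEnergy_nonneg {n d k : ℕ} (P : Fin n → Fin d → ℝ) (c : Fin n → Fin k) :
    0 ≤ centroidEnergy P c :=
  Finset.sum_nonneg fun _ _ => div_nonneg (sqNorm_nonneg _) (Nat.cast_nonneg _)

lemma kmeansCost_nonneg {n d k : ℕ} (P : Fin n → Fin d → ℝ) (c : Fin n → Fin k) :
    0 ≤ kmeansCost P c := by
  rw [kmeansCost_eq_centroid]
  exact Finset.sum_nonneg fun _ _ => sqNorm_nonneg _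

/-- Pythagoras for the `k`-means cost. -/
lemma kmeansCost_add {n d k : ℕ} (B E : Fin n → Fin d → ℝ) (h : ∀ i j, dotp (B i) (E j) = 0)
    (c : Fin n → Fin k) :
    kmeansCost (fun j => B j + E j) c = kmeansCost B c + kmeansCost E c := by
  have hs : ∀ C : Finset (Fin n), dotp (∑ j ∈ C, B j) (∑ j ∈ C, E j) = 0 := fun C => by
    rw [dotp_sum_left]
    refine Finset.sum_eq_zero fun i _ => ?_
    rw [dotp_comm, dotp_sum_left]
    exact Finset.sum_eq_zero fun j _ => by rw [dotp_comm, h]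
  simp only [kmeansCost_eq, centroidEnergy, Finset.sum_add_distrib, sqNorm_add_of_orth (h _ _),
    sqNorm_add_of_orth (hs _), add_div]
  ring

/-- Replacing points by their centroids yields a matrix of rank at most `k`, so the best rank-`k`
error is a lower bound for the `k`-means cost. -/
lemma frobSq_le_kmeansCost {n d k : ℕ} (A Ak : Matrix (Fin n) (Fin d) ℝ)
    (hAkbest : ∀ X : Matrix (Fin n) (Fin d) ℝ, X.rank ≤ k → frobSq (A - Ak) ≤ frobSq (A - X))
    (c : Fin n → Fin k) : frobSq (A - Ak) ≤ kmeansCost (fun j l => A j l) c := by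
  let M : Matrix (Fin k) (Fin d) ℝ := fun i => centroid (fun j l => A j l) (cluster c i)
  let Q : Matrix (Fin n) (Fin k) ℝ := fun j i => if c j = i then 1 else 0
  have hQM : ∀ j l, (Q * M) j l = M (c j) l := fun j l => by
    rw [Matrix.mul_apply]; simp [Q]
  have hr : (Q * M).rank ≤ k :=
    (Matrix.rank_mul_le_left Q M).trans ((Matrix.rank_le_width Q))
  refine (hAkbest _ hr).trans_eq ?_
  rw [kmeansCost_eq_centroid]
  simp only [frobSq, Matrix.sub_apply, hQM]
  rfl

/-! ### The residual of the projection -/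

/-- Transposed spectral bound: if `x = ∑ j ∈ C, E j` and the vector `a` of inner products
`⟨E j, x⟩` satisfies `‖a‖² ≤ s ‖x‖²`, then `‖x‖² ≤ s |C|`, by Cauchy-Schwarz applied to
`‖x‖² = ∑ j ∈ C, a j`. -/
lemma sqNorm_sum_le {n d : ℕ} (E : Fin n → Fin d → ℝ) (C : Finset (Fin n)) (a : Fin n → ℝ) (s : ℝ)
    (hs : 0 ≤ s) (ha : ∀ j, dotp (E j) (∑ j ∈ C, E j) = a j)
    (h : sqNorm a ≤ s * sqNorm (∑ j ∈ C, E j)) :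
    sqNorm (∑ j ∈ C, E j) ≤ s * C.card := by
  set x := ∑ j ∈ C, E j with hx
  have h1 : sqNorm x = ∑ j ∈ C, a j := by
    conv_lhs => rw [sqNorm_eq]
    nth_rewrite 1 [hx]
    rw [dotp_sum_left]
    exact Finset.sum_congr rfl fun j _ => ha j
  have h2 : (∑ j ∈ C, a j) ^ 2 ≤ C.card * ∑ j ∈ C, a j ^ 2 := sq_sum_le_card_mul_sum_sq
  have h3 : ∑ j ∈ C, a j ^ 2 ≤ sqNorm a :=
    Finset.sum_le_sum_of_subset_of_nonneg (Finset.subset_univ C) fun _ _ _ => sq_nonneg _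
  have h4 : sqNorm x * sqNorm x ≤ (s * C.card) * sqNorm x := by
    rw [← h1] at h2
    have := mul_le_mul_of_nonneg_left (h3.trans h) (Nat.cast_nonneg (α := ℝ) C.card)
    nlinarith
  rcases (sqNorm_nonneg x).eq_or_lt with h0 | h0
  · rw [← h0]; positivity
  · exact le_of_mul_le_mul_right h4 h0

lemma centroidEnergy_le {n d k : ℕ} (E : Fin n → Fin d → ℝ) (c : Fin n → Fin k) (s : ℝ)
    (hs : 0 ≤ s) (h : ∀ C : Finset (Fin n), sqNorm (∑ j ∈ C, E j) ≤ s * C.card) :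
    centroidEnergy E c ≤ k * s := by
  calc centroidEnergy E c ≤ ∑ _i : Fin k, s :=
        Finset.sum_le_sum fun i _ => div_le_of_le_mul₀ (Nat.cast_nonneg _) hs (h _)
    _ = k * s := by simp

lemma rowSpace_le_fromRows {n d mS pS : ℕ} (A : Matrix (Fin n) (Fin d) ℝ)
    (S : Matrix (Fin mS) (Fin n) ℝ) (S2 : Matrix (Fin pS) (Fin n) ℝ) :
    rowSpace (S * A) ≤ rowSpace (Matrix.fromRows S S2 * A) := by
  refine Submodule.span_mono ?_
  rintro _ ⟨i, rfl⟩
  exact ⟨Sum.inl i, rfl⟩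

theorem stmt5 {n d mS pS r : ℕ} (k : ℕ) (hk : 0 < k)
    (A Ak : Matrix (Fin n) (Fin d) ℝ)
    (hAkrank : Ak.rank ≤ k)
    (hAkbest : ∀ X : Matrix (Fin n) (Fin d) ℝ, X.rank ≤ k → frobSq (A - Ak) ≤ frobSq (A - X))
    (η : ℝ) (hη0 : 0 < η) (hη1 : η ≤ 1 / 3)
    (S : Matrix (Fin mS) (Fin n) ℝ) (S2 : Matrix (Fin pS) (Fin n) ℝ)
    -- `V` has orthonormal columns spanning `row(SA)` (coming from the SVD `SA = UΣVᵀ`)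
    (V : Matrix (Fin d) (Fin r) ℝ) (hV : Vᵀ * V = 1)
    (hVspan : colSpace V = rowSpace (S * A))
    -- `‖A - A V Vᵀ‖₂² ≤ (η/k) ‖A - A_k‖_F²`
    (hspec : ∀ v : Fin d → ℝ,
      sqNorm ((A - A * V * Vᵀ).mulVec v) ≤ η / (k : ℝ) * frobSq (A - Ak) * sqNorm v)
    -- `π` is the orthogonal projection onto `row(S̄ A)` where `S̄` extends `S`
    (π : (Fin d → ℝ) → (Fin d → ℝ))
    (hπmem : ∀ x, π x ∈ rowSpace (Matrix.fromRows S S2 * A))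
    (hπorth : ∀ x, ∀ y ∈ rowSpace (Matrix.fromRows S S2 * A), dotp (x - π x) y = 0)
    (α : ℝ) (hα : 1 ≤ α)
    -- `c̄` is an `α`-approximate `k`-means clustering of the projected points
    (cbar : Fin n → Fin k)
    (hcbar : kmeansCost (fun j => π (fun l => A j l)) cbar
      ≤ α * ⨅ c : Fin n → Fin k, kmeansCost (fun j => π (fun l => A j l)) c) :
    kmeansCost (fun j l => A j l) cbar
      ≤ α * (1 + η) ^ 2 * ⨅ c : Fin n → Fin k, kmeansCost (fun j l => A j l) c := by
  classical
  have : Nonempty (Fin k) := ⟨⟨0, hk⟩⟩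
  set R := rowSpace (Matrix.fromRows S S2 * A) with hR
  set B : Fin n → Fin d → ℝ := fun j => π (fun l => A j l) with hB
  set E : Fin n → Fin d → ℝ := fun j => (fun l => A j l) - π (fun l => A j l) with hE
  have hA : (fun j l => A j l) = fun j => B j + E j := by
    funext j; simp [hB, hE]
  have hEorth : ∀ (C : Finset (Fin n)), ∀ y ∈ R, dotp y (∑ j ∈ C, E j) = 0 := fun C y hy => by
    rw [dotp_comm, dotp_sum_left]
    exact Finset.sum_eq_zero fun j _ => hπorth _ y hy
  have hBE : ∀ i j, dotp (B i) (E j) = 0 := fun i j => by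
    rw [dotp_comm]; exact hπorth _ _ (hπmem _)
  have hfrob : 0 ≤ frobSq (A - Ak) :=
    Finset.sum_nonneg fun _ _ => Finset.sum_nonneg fun _ _ => sq_nonneg _
  have hs : 0 ≤ η / (k : ℝ) * frobSq (A - Ak) := by positivity
  have hsum : ∀ C : Finset (Fin n),
      sqNorm (∑ j ∈ C, E j) ≤ η / (k : ℝ) * frobSq (A - Ak) * C.card := fun C => by
    -- The residual sum is orthogonal to `row(SA)`, so `V Vᵀ` kills it and `A - A V Vᵀ` acts as `A`.
    have hV0 : Vᵀ.mulVec (∑ j ∈ C, E j) = 0 := by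
      funext i
      refine hEorth C (Vᵀ i) (rowSpace_le_fromRows A S S2 ?_)
      rw [← hVspan]
      exact Submodule.subset_span ⟨i, rfl⟩
    have hmul : (A - A * V * Vᵀ).mulVec (∑ j ∈ C, E j) = A.mulVec (∑ j ∈ C, E j) := by
      rw [Matrix.sub_mulVec, ← Matrix.mulVec_mulVec, hV0, Matrix.mulVec_zero, sub_zero]
    refine sqNorm_sum_le E C _ _ hs (fun j => ?_) (hmul ▸ hspec (∑ j ∈ C, E j))
    have h1 : A.mulVec (∑ j ∈ C, E j) j = dotp (fun l => A j l) (∑ j ∈ C, E j) := rfl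
    rw [h1, congrFun hA j, dotp_add_left, hEorth C (B j) (hπmem _), zero_add]
  have hcost : ∀ c : Fin n → Fin k,
      kmeansCost (fun j l => A j l) c = kmeansCost B c + kmeansCost E c := fun c => by
    rw [hA]; exact kmeansCost_add B E hBE c
  obtain ⟨c, hc⟩ := exists_eq_ciInf_of_finite
    (f := fun c : Fin n → Fin k => kmeansCost (fun j l => A j l) c)
  have hBinf : ⨅ c : Fin n → Fin k, kmeansCost B c ≤ kmeansCost B c :=
    ciInf_le (Set.finite_range _).bddBelow c
  have hG : centroidEnergy E c ≤ η * kmeansCost (fun j l => A j l) c := by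
    refine (centroidEnergy_le E c _ hs hsum).trans ?_
    have : (k : ℝ) * (η / k * frobSq (A - Ak)) = η * frobSq (A - Ak) := by
      have : (k : ℝ) ≠ 0 := by exact_mod_cast hk.ne'
      field_simp
    rw [this]
    exact mul_le_mul_of_nonneg_left (frobSq_le_kmeansCost A Ak hAkbest c) hη0.le
  rw [← hc]
  have hbar := hcost cbar
  have hstar := hcost c
  have hEbar := kmeansCost_eq E cbar
  have hEstar := kmeansCost_eq E c
  have hGbar := centroidEnergy_nonneg E cbar
  have hEnn := kmeansCost_nonneg E c
  have hAnn := kmeansCost_nonneg (fun j l => A j l) c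
  set K := kmeansCost (fun j l => A j l) c
  have hα0 : 0 ≤ α := by linarith
  have h1 : kmeansCost B cbar ≤ α * kmeansCost B c :=
    hcbar.trans (mul_le_mul_of_nonneg_left hBinf hα0)
  have hE1 : kmeansCost E cbar ≤ α * (kmeansCost E c + centroidEnergy E c) := by
    have := centroidEnergy_nonneg E c
    nlinarith
  -- The argument yields the factor `α (1 + η)`, which is stronger than `α (1 + η)²`.
  have h2 : kmeansCost (fun j l => A j l) cbar ≤ α * ((1 + η) * K) := by
    have := mul_le_mul_of_nonneg_left hG hα0
    nlinarith
  refine h2.trans ?_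
  rw [mul_assoc]
  refine mul_le_mul_of_nonneg_left ?_ hα0
  nlinarith [mul_nonneg hη0.le hAnn, mul_nonneg (sq_nonneg η) hAnn]
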